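/- arXiv:1110.5690 — 4 statements merged into one kernel-verified Lean document; each statement's English description precedes it below -/
import Mathlib

section
/- Suppose A has continuous maximal regularity on J = [0,T] with constant M ≥ 1, and let c₁ be the norm of the embedding E₁ ↪ E₀. For x ∈ E₀ and μ ∈ ℂ with Re μ > 0, let u_{μ̄}(·,x) denote the unique solution of u'(t) − A u(t) = e^{−μ̄ t} x on J with u(0) = 0, and define V_μ x := (2 Re μ · e^{−μ T} / (1 − e^{−2 (Re μ) T})) · u_{μ̄}(T,x). Then V_μ ∈ B(E₀) with ‖V_μ x‖₀ ≤ c₁ M · (2 Re μ · e^{−(Re μ) T} / (1 − e^{−2 (Re μ) T})) · ‖x‖₀ for every x ∈ E₀, the operator norm ‖V_μ‖_{B(E₀)} tends to 0 as Re μ → ∞, and in particular there exists ω₂ ≥ 0 such that ‖V_μ‖_{B(E₀)} < 1/2 whenever Re μ > ω₂. -/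
/-!
The maximal regularity estimate at the endpoint `T`, with zero initial value, gives
`‖u(T)‖₁ ≤ M sup_J ‖e^{-μ̄t} x‖₀ ≤ M ‖x‖₀` because `|e^{-μ̄t}| = e^{-(Re μ)t} ≤ 1` for `t ≥ 0`.
Composing with the embedding and multiplying by the modulus of the scalar `Vcoef T μ`, which
depends only on `T` and `Re μ` (`norm_Vcoef`), yields the bound on `V_μ`. That modulus tends to `0` as
`Re μ → ∞` (`tendsto_Vcoef_bound`), since `r e^{-rT} → 0` and `1 - e^{-2rT} → 1`.
-/

open Set Filter Topology MeasureTheory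

variable {E₀ E₁ : Type*} [NormedAddCommGroup E₀] [NormedSpace ℂ E₀] [CompleteSpace E₀]
  [NormedAddCommGroup E₁] [NormedSpace ℂ E₁] [CompleteSpace E₁]

/-- `u ∈ C¹([0,T],E₀) ∩ C([0,T],E₁)` is a classical solution of `u' - A u = f`, `u 0 = x`
on `J = [0,T]`, where `E₁` is viewed as a subspace of `E₀` via the embedding `ι`.
The derivative of `ι ∘ u` is `f + A ∘ u`, which is continuous on `[0,T]`, so the
`C¹`-requirement is contained in this predicate. -/
def IsSolOn (T : ℝ) (ι A : E₁ →L[ℂ] E₀) (f : ℝ → E₀) (x : E₁) (u : ℝ → E₁) : Prop :=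
  ContinuousOn u (Set.Icc 0 T) ∧
  (∀ t ∈ Set.Icc (0:ℝ) T,
    HasDerivWithinAt (fun s => ι (u s)) (f t + A (u t)) (Set.Icc 0 T) t) ∧
  u 0 = x

/-- `A` has continuous maximal regularity on `J = [0,T]` with constant `M ≥ 1`:
for every `f ∈ C(J,E₀)` and every `x ∈ E₁` there is a unique solution
`u ∈ C¹(J,E₀) ∩ C(J,E₁)` of `u' - Au = f`, `u 0 = x`, and it satisfies
`sup_J (‖u'(t)‖₀ + ‖u(t)‖₁) ≤ M (sup_J ‖f‖₀ + ‖x‖₁)`. -/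
def ContMaxReg (T M : ℝ) (ι A : E₁ →L[ℂ] E₀) : Prop :=
  ∀ f : ℝ → E₀, ContinuousOn f (Set.Icc 0 T) → ∀ x : E₁,
    ∃ u : ℝ → E₁, IsSolOn T ι A f x u ∧
      (∀ v : ℝ → E₁, IsSolOn T ι A f x v → Set.EqOn v u (Set.Icc 0 T)) ∧
      (∀ C : ℝ, (∀ s ∈ Set.Icc (0:ℝ) T, ‖f s‖ ≤ C) →
        ∀ t ∈ Set.Icc (0:ℝ) T, ‖f t + A (u t)‖ + ‖u t‖ ≤ M * (C + ‖x‖))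

/-- `A` is closed as an unbounded operator on `E₀` with domain `E₁` (via the embedding `ι`). -/
def ClosedVia (ι A : E₁ →L[ℂ] E₀) : Prop :=
  ∀ (x : ℕ → E₁) (y z : E₀), Filter.Tendsto (fun n => ι (x n)) Filter.atTop (nhds y) →
    Filter.Tendsto (fun n => A (x n)) Filter.atTop (nhds z) →
    ∃ w : E₁, ι w = y ∧ A w = z

/-- The scalar `2 Re μ · e^{-μT} / (1 - e^{-2(Re μ)T})` appearing in `V_μ x`. -/
noncomputable def Vcoef (T : ℝ) (μ : ℂ) : ℂ :=
  ((2 * μ.re / (1 - Real.exp (-(2 * μ.re * T))) : ℝ) : ℂ) * Complex.exp (-(μ * (T:ℂ)))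

lemma norm_Vcoef {T : ℝ} (hT : 0 < T) {μ : ℂ} (hμ : 0 < μ.re) :
    ‖Vcoef T μ‖ = 2 * μ.re * Real.exp (-(μ.re * T)) / (1 - Real.exp (-(2 * μ.re * T))) := by
  have hden : 0 < 1 - Real.exp (-(2 * μ.re * T)) := by
    have : Real.exp (-(2 * μ.re * T)) < 1 := by
      rw [← Real.exp_zero, Real.exp_lt_exp]
      nlinarith [mul_pos hμ hT]
    linarith
  have hnn : 0 ≤ 2 * μ.re / (1 - Real.exp (-(2 * μ.re * T))) := by positivity
  rw [Vcoef, norm_mul, Complex.norm_real, Real.norm_of_nonneg hnn, Complex.norm_exp]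
  simp only [Complex.neg_re, Complex.re_mul_ofReal]
  ring

lemma tendsto_Vcoef_bound {T : ℝ} (hT : 0 < T) (K : ℝ) :
    Tendsto (fun r : ℝ => K * (2 * r * Real.exp (-(r * T)) / (1 - Real.exp (-(2 * r * T)))))
      atTop (𝓝 0) := by
  have h1 : Tendsto (fun r : ℝ => r * T) atTop atTop := tendsto_id.atTop_mul_const hT
  have h2 : Tendsto (fun r : ℝ => 2 * r * Real.exp (-(r * T))) atTop (𝓝 0) := by
    have h := ((Real.tendsto_pow_mul_exp_neg_atTop_nhds_zero 1).comp h1).const_mul (2 / T)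
    rw [mul_zero] at h
    refine h.congr fun r => ?_
    simp only [Function.comp_apply, pow_one]
    field_simp
  have h3 : Tendsto (fun r : ℝ => 1 - Real.exp (-(2 * r * T))) atTop (𝓝 1) := by
    have h := (Real.tendsto_exp_neg_atTop_nhds_zero.comp
      (h1.const_mul_atTop (two_pos : (0 : ℝ) < 2))).const_sub 1
    rw [sub_zero] at h
    refine h.congr fun r => ?_
    simp only [Function.comp_apply, mul_assoc]
  simpa using (h2.div h3 one_ne_zero).const_mul K

/-- With `u_{μ̄}(·,x)` the unique solution of `u' - Au = e^{-μ̄ t}x`, `u 0 = 0`,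
and `V_μ x := (2Reμ·e^{-μT}/(1-e^{-2(Reμ)T})) u_{μ̄}(T,x)`, the operator `V_μ` is bounded on
`E₀` with `‖V_μ x‖₀ ≤ c₁ M (2Reμ e^{-(Reμ)T}/(1-e^{-2(Reμ)T})) ‖x‖₀`; its norm tends to `0`
as `Re μ → ∞`; and there is `ω₂ ≥ 0` with `‖V_μ‖ < 1/2` for `Re μ > ω₂`. -/
theorem continuous_max_reg_Vmu_bound
    (T M : ℝ) (hT : 0 < T) (hM : 1 ≤ M)
    (ι A : E₁ →L[ℂ] E₀) (hinj : Function.Injective ι) (hdense : DenseRange ι)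
    (hclosed : ClosedVia ι A) (hmr : ContMaxReg T M ι A) :
    (∀ (x : E₀) (μ : ℂ), 0 < μ.re →
      ∀ u : ℝ → E₁,
        IsSolOn T ι A (fun t : ℝ => Complex.exp (-((starRingEnd ℂ) μ * (t:ℂ))) • x) 0 u →
        ‖Vcoef T μ • ι (u T)‖
          ≤ ‖ι‖ * M * (2 * μ.re * Real.exp (-(μ.re * T)) /
              (1 - Real.exp (-(2 * μ.re * T)))) * ‖x‖) ∧
    (∀ ε : ℝ, 0 < ε → ∃ R : ℝ, ∀ μ : ℂ, R < μ.re →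
      ∀ (x : E₀) (u : ℝ → E₁),
        IsSolOn T ι A (fun t : ℝ => Complex.exp (-((starRingEnd ℂ) μ * (t:ℂ))) • x) 0 u →
        ‖Vcoef T μ • ι (u T)‖ ≤ ε * ‖x‖) ∧
    (∃ ω₂ : ℝ, 0 ≤ ω₂ ∧ ∀ μ : ℂ, ω₂ < μ.re →
      ∃ c : ℝ, c < 1 / 2 ∧ ∀ (x : E₀) (u : ℝ → E₁),
        IsSolOn T ι A (fun t : ℝ => Complex.exp (-((starRingEnd ℂ) μ * (t:ℂ))) • x) 0 u →
        ‖Vcoef T μ • ι (u T)‖ ≤ c * ‖x‖) := by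
  have bound : ∀ (x : E₀) (μ : ℂ), 0 < μ.re → ∀ u : ℝ → E₁,
      IsSolOn T ι A (fun t : ℝ => Complex.exp (-((starRingEnd ℂ) μ * (t:ℂ))) • x) 0 u →
      ‖Vcoef T μ • ι (u T)‖ ≤ ‖ι‖ * M * (2 * μ.re * Real.exp (-(μ.re * T)) /
        (1 - Real.exp (-(2 * μ.re * T)))) * ‖x‖ := by
    intro x μ hμ u hu
    have hTmem : T ∈ Set.Icc (0:ℝ) T := ⟨hT.le, le_rfl⟩
    obtain ⟨v, -, huniq, hest⟩ := hmr
      (fun t : ℝ => Complex.exp (-((starRingEnd ℂ) μ * (t:ℂ))) • x)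
      (Continuous.continuousOn (by fun_prop)) 0
    have hsup : ∀ s ∈ Set.Icc (0:ℝ) T,
        ‖Complex.exp (-((starRingEnd ℂ) μ * (s:ℂ))) • x‖ ≤ ‖x‖ := by
      intro s hs
      rw [norm_smul, Complex.norm_exp]
      refine mul_le_of_le_one_left (norm_nonneg x) (Real.exp_le_one_iff.mpr ?_)
      simp only [Complex.neg_re, Complex.re_mul_ofReal, Complex.conj_re]
      nlinarith [mul_nonneg hμ.le hs.1]
    have h1 : ‖u T‖ ≤ M * ‖x‖ := by
      have h := hest ‖x‖ hsup T hTmem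
      rw [norm_zero, add_zero] at h
      rw [huniq u hu hTmem]
      exact (le_add_of_nonneg_left (norm_nonneg _)).trans h
    rw [norm_smul, ← norm_Vcoef hT hμ]
    calc ‖Vcoef T μ‖ * ‖ι (u T)‖ ≤ ‖Vcoef T μ‖ * (‖ι‖ * (M * ‖x‖)) := by
          gcongr
          exact ι.le_opNorm_of_le h1
      _ = ‖ι‖ * M * ‖Vcoef T μ‖ * ‖x‖ := by ring
  have small : ∀ ε : ℝ, 0 < ε → ∃ R : ℝ, ∀ μ : ℂ, R < μ.re → ∀ (x : E₀) (u : ℝ → E₁),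
      IsSolOn T ι A (fun t : ℝ => Complex.exp (-((starRingEnd ℂ) μ * (t:ℂ))) • x) 0 u →
      ‖Vcoef T μ • ι (u T)‖ ≤ ε * ‖x‖ := by
    intro ε hε
    obtain ⟨R, hR⟩ := eventually_atTop.mp
      ((tendsto_Vcoef_bound hT (‖ι‖ * M)).eventually (eventually_le_nhds hε))
    refine ⟨max R 0, fun μ hμ x u hu => ?_⟩
    refine (bound x μ ((le_max_right R 0).trans_lt hμ) u hu).trans ?_
    gcongr
    exact hR μ.re ((le_max_left R 0).trans hμ.le)
  refine ⟨bound, small, ?_⟩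
  obtain ⟨R, hR⟩ := small (1 / 4) (by norm_num)
  exact ⟨max R 0, le_max_right R 0, fun μ hμ =>
    ⟨1 / 4, by norm_num, hR μ ((le_max_left R 0).trans_lt hμ)⟩⟩
end

section
/- Suppose A has continuous maximal regularity on J = [0,T] with constant M ≥ 1. For x ∈ E₀ and μ ∈ ℂ with Re μ > 0, let u_{μ̄}(·,x) denote the unique solution of u'(t) − A u(t) = e^{−μ̄ t} x on J with u(0) = 0, and define U_μ x := 2 Re μ · ∫₀^T e^{−μ t} u_{μ̄}(t,x) dt. Then U_μ x ∈ E₁ and (μ − A) U_μ x = (1 − e^{−2 (Re μ) T}) x − 2 Re μ · e^{−μ T} u_{μ̄}(T,x), for every x ∈ E₀ and every μ with Re μ > 0. (Here the closedness of A on E₀ justifies interchanging A with the integral.) -/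
/-!
Write `L = μ ι - A`, a bounded operator `E₁ → E₀`, and `u` for the solution with right-hand side
`e^{-μ̄ t} x`. Since `e^{-μ t} e^{-μ̄ t} = e^{-2 (Re μ) t}`, the product rule shows that
`h(t) = 2 (Re μ) e^{-μ t} ι u(t) + e^{-2 (Re μ) t} x` has derivative
`-2 (Re μ) L (e^{-μ t} u(t))`: the `x`-terms cancel. As `u` is continuous into `E₁`, the operator
`L` commutes with the integral, so `L U = h(0) - h(T)` by the fundamental theorem of calculus,
which is the claim because `u(0) = 0`.
-/

open Set Filter Topology MeasureTheory

variable {E₀ E₁ : Type*} [NormedAddCommGroup E₀] [NormedSpace ℂ E₀] [CompleteSpace E₀]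
  [NormedAddCommGroup E₁] [NormedSpace ℂ E₁] [CompleteSpace E₁]

/-- With `u_{μ̄}(·,x)` the unique solution of `u' - Au = e^{-μ̄ t}x`, `u 0 = 0`,
and `U_μ x := 2Reμ ∫₀^T e^{-μt} u_{μ̄}(t,x) dt` (an element of `E₁`, since `u_{μ̄}` is a
continuous `E₁`-valued function), one has
`(μ - A) U_μ x = (1 - e^{-2(Reμ)T}) x - 2Reμ e^{-μT} u_{μ̄}(T,x)` for `Re μ > 0`. -/
theorem continuous_max_reg_Umu_identity
    (T M : ℝ) (hT : 0 < T) (hM : 1 ≤ M)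
    (ι A : E₁ →L[ℂ] E₀) (hinj : Function.Injective ι) (hdense : DenseRange ι)
    (hclosed : ClosedVia ι A) (hmr : ContMaxReg T M ι A) :
    ∀ (x : E₀) (μ : ℂ), 0 < μ.re →
      ∀ u : ℝ → E₁,
        IsSolOn T ι A (fun t : ℝ => Complex.exp (-((starRingEnd ℂ) μ * (t:ℂ))) • x) 0 u →
        ∀ U : E₁,
          U = ((2 * μ.re : ℝ) : ℂ) • ∫ t in (0:ℝ)..T, Complex.exp (-(μ * (t:ℂ))) • u t →
          μ • ι U - A U
            = (((1 - Real.exp (-(2 * μ.re * T))) : ℝ) : ℂ) • x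
              - (((2 * μ.re : ℝ) : ℂ) * Complex.exp (-(μ * (T:ℂ)))) • ι (u T) := by
  intro x μ _ u hu U hU
  obtain ⟨hc, hd, h0⟩ := hu
  set L : E₁ →L[ℂ] E₀ := μ • ι - A with hL
  set c : ℂ := ((2 * μ.re : ℝ) : ℂ) with hcdef
  have hcμ : μ + (starRingEnd ℂ) μ = c := Complex.add_conj μ
  have hexp (a : ℂ) (t : ℝ) : HasDerivAt (fun s : ℝ => Complex.exp (-(a * (s : ℂ))))
      (-(a * Complex.exp (-(a * (t : ℂ))))) t := by
    have h1 : HasDerivAt (fun z : ℂ => Complex.exp (-(a * z)))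
        (Complex.exp (-(a * (t : ℂ))) * (-(a * 1))) (t : ℂ) :=
      (((hasDerivAt_id (t : ℂ)).const_mul a).fun_neg).cexp
    convert h1.comp_ofReal using 1
    ring
  have hecont (a : ℂ) : Continuous (fun s : ℝ => Complex.exp (-(a * (s : ℂ)))) := by fun_prop
  have hwcont : ContinuousOn (fun t : ℝ => Complex.exp (-(μ * (t : ℂ))) • u t) (Icc 0 T) :=
    (hecont μ).continuousOn.smul hc
  have hwint : IntervalIntegrable (fun t : ℝ => Complex.exp (-(μ * (t : ℂ))) • u t) volume 0 T :=
    ContinuousOn.intervalIntegrable_of_Icc hT.le hwcont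
  set h : ℝ → E₀ := fun t => (c * Complex.exp (-(μ * (t : ℂ)))) • ι (u t)
    + Complex.exp (-(c * (t : ℂ))) • x with hh
  have hhcont : ContinuousOn h (Icc 0 T) :=
    ((continuous_const.mul (hecont μ)).continuousOn.smul
      (ι.continuous.comp_continuousOn hc)).add
      ((hecont c).smul continuous_const).continuousOn
  have hhderiv : ∀ t ∈ Ioo (0 : ℝ) T,
      HasDerivAt h (-(c • L (Complex.exp (-(μ * (t : ℂ))) • u t))) t := by
    intro t ht
    have h1 := (hd t (Ioo_subset_Icc_self ht)).hasDerivAt (Icc_mem_nhds ht.1 ht.2)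
    have h2 := (((hexp μ t).const_mul c).fun_smul h1).fun_add ((hexp c t).smul_const x)
    refine h2.congr_deriv ?_
    -- As `μ + μ̄ = c`, the forcing term contributes exactly what differentiating the `x`-term removes.
    have he : Complex.exp (-(c * (t : ℂ)))
        = Complex.exp (-(μ * (t : ℂ))) * Complex.exp (-((starRingEnd ℂ) μ * (t : ℂ))) := by
      rw [← Complex.exp_add, ← hcμ]
      ring_nf
    rw [he]
    simp only [hL, sub_apply, smul_apply, map_smul]
    module
  have hint : IntervalIntegrable
      (fun t : ℝ => -(c • L (Complex.exp (-(μ * (t : ℂ))) • u t))) volume 0 T :=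
    ContinuousOn.intervalIntegrable_of_Icc hT.le
      ((L.continuous.comp_continuousOn hwcont).const_smul c).neg
  have hFTC := intervalIntegral.integral_eq_sub_of_hasDerivAt_of_le hT.le hhcont hhderiv hint
  rw [intervalIntegral.integral_neg, intervalIntegral.integral_smul,
    L.intervalIntegral_comp_comm hwint, ← map_smul, ← hU] at hFTC
  have hLU : L U = h 0 - h T := by rw [← neg_sub, ← hFTC, neg_neg]
  have hLU' : L U = μ • ι U - A U := rfl
  have hreal : Complex.exp (-(c * (T : ℂ))) = ((Real.exp (-(2 * μ.re * T)) : ℝ) : ℂ) := by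
    rw [hcdef]
    push_cast
    rfl
  rw [← hLU', hLU]
  simp only [hh, h0, hreal, map_zero, smul_zero, Complex.ofReal_zero, mul_zero, neg_zero,
    Complex.exp_zero, Complex.ofReal_sub, Complex.ofReal_one]
  module
end

section
/- Suppose A has continuous maximal regularity on J = [0,T] with constant M ≥ 1. Then there exists ω₂ ≥ 0 such that for every μ ∈ ℂ with Re μ > ω₂ the operator μ − A : E₁ → E₀ is surjective. -/
/-!
Fix `μ` with `M * exp (-(Re μ) T) < 1` and `y : E₀`. For `x : E₁` let `u` solve
`u' - A u = exp (μ t) y`, `u 0 = x`. The map `x ↦ exp (-μ T) u(T)` is Lipschitz on `E₁` with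
constant `M * exp (-(Re μ) T)`, because differences of solutions solve the homogeneous problem,
for which maximal regularity gives `‖u(T)‖ ≤ M ‖x‖`. By Banach's fixed point theorem there is
therefore a solution with `u(T) = exp (μ T) u(0)`.

For that solution `w(t) = exp (-μ t) u(t)` satisfies `w' = y + A w - μ w` and `w(0) = w(T)`.
Integrating over `[0,T]` yields `0 = T y - (μ - A) ∫ w`, so the mean of `w`
over `[0,T]` is a preimage of `y` under `μ - A`. No semigroup or Laplace transform is needed, and
one may take `ω₂ = log M / T`.
-/


open Set Filter Topology MeasureTheory

variable {E₀ E₁ : Type*} [NormedAddCommGroup E₀] [NormedSpace ℂ E₀] [CompleteSpace E₀]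
  [NormedAddCommGroup E₁] [NormedSpace ℂ E₁] [CompleteSpace E₁]

lemma IsSolOn.sub {T : ℝ} {ι A : E₁ →L[ℂ] E₀} {f g : ℝ → E₀} {x y : E₁} {u v : ℝ → E₁}
    (hu : IsSolOn T ι A f x u) (hv : IsSolOn T ι A g y v) :
    IsSolOn T ι A (f - g) (x - y) (u - v) := by
  refine ⟨hu.1.sub hv.1, fun t ht => ?_, by simp [hu.2.2, hv.2.2]⟩
  refine (((hu.2.1 t ht).sub (hv.2.1 t ht)).congr_deriv ?_).congr_of_mem (fun s _ => ?_) ht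
  · simp only [Pi.sub_apply, map_sub]; abel
  · simp

/-- Solutions of the homogeneous problem satisfy `‖u(t)‖ ≤ M ‖x‖`; uniqueness transfers the
estimate from the solution provided by `ContMaxReg` to an arbitrary one. -/
lemma ContMaxReg.norm_le_of_homogeneous {T M : ℝ} {ι A : E₁ →L[ℂ] E₀}
    (hmr : ContMaxReg T M ι A) {x : E₁} {u : ℝ → E₁} (hu : IsSolOn T ι A 0 x u)
    {t : ℝ} (ht : t ∈ Icc 0 T) : ‖u t‖ ≤ M * ‖x‖ := by
  obtain ⟨v, -, huniq, hest⟩ := hmr 0 continuousOn_const x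
  have h := hest 0 (by simp) t ht
  rw [← huniq u hu ht, zero_add] at h
  linarith [norm_nonneg ((0 : ℝ → E₀) t + A (u t))]

/-- A solution with right-hand side `exp (μ t) y` that is periodic up to the factor `exp (μ T)`
yields a preimage of `y` under `μ - A`, namely the mean of `exp (-μ t) u(t)` over `[0,T]`. -/
lemma exists_preimage_of_periodic {T : ℝ} (hT : 0 < T) {ι A : E₁ →L[ℂ] E₀} {μ : ℂ} {y : E₀}
    {x : E₁} {u : ℝ → E₁}
    (hu : IsSolOn T ι A (fun t => Complex.exp (μ * t) • y) x u)
    (hper : Complex.exp (-(μ * T)) • u T = x) :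
    ∃ z : E₁, μ • ι z - A z = y := by
  set w : ℝ → E₁ := fun t => Complex.exp (-(μ * t)) • u t with hw
  have hwc : ContinuousOn w (Icc 0 T) := by
    refine ContinuousOn.smul (Continuous.continuousOn ?_) hu.1
    fun_prop
  have hιc : ContinuousOn (fun t => ι (w t)) (Icc 0 T) := ι.continuous.comp_continuousOn hwc
  have hAc : ContinuousOn (fun t => A (w t)) (Icc 0 T) := A.continuous.comp_continuousOn hwc
  have hwi : IntervalIntegrable w volume 0 T := hwc.intervalIntegrable_of_Icc hT.le
  have hιi : IntervalIntegrable (fun t => ι (w t)) volume 0 T :=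
    hιc.intervalIntegrable_of_Icc hT.le
  have hAi : IntervalIntegrable (fun t => A (w t)) volume 0 T :=
    hAc.intervalIntegrable_of_Icc hT.le
  have hyi : IntervalIntegrable (fun _ : ℝ => y) volume 0 T := intervalIntegrable_const
  have hderiv : ∀ t ∈ Ioo 0 T,
      HasDerivAt (fun s => ι (w s)) (y + A (w t) - μ • ι (w t)) t := by
    intro t ht
    have h1 := (hu.2.1 t (Ioo_subset_Icc_self ht)).hasDerivAt (Icc_mem_nhds ht.1 ht.2)
    have h2 : HasDerivAt (fun s : ℝ => Complex.exp (-(μ * s)))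
        (Complex.exp (-(μ * t)) * -μ) t := by
      have h3 : HasDerivAt (fun s : ℝ => -(μ * (s : ℂ))) (-(μ * 1)) t :=
        (Complex.ofRealCLM.hasDerivAt.const_mul μ).neg
      simpa using h3.cexp
    have h4 := h2.smul h1
    have h5 : (fun s => ι (w s)) = fun s : ℝ => Complex.exp (-(μ * s)) • ι (u s) := by
      ext s; simp [hw]
    rw [h5]
    refine h4.congr_deriv ?_
    have h6 : Complex.exp (-(μ * t)) * Complex.exp (μ * t) = 1 := by
      rw [← Complex.exp_add]; simp
    simp only [hw, map_smul, smul_add, smul_smul, h6, one_smul]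
    module
  have hFTC := intervalIntegral.integral_eq_sub_of_hasDerivAt_of_le hT.le hιc hderiv
    ((hyi.add hAi).sub (hιi.smul μ))
  have hsi : IntervalIntegrable (fun t => μ • ι (w t)) volume 0 T := hιi.smul μ
  have hends : ι (w T) - ι (w 0) = 0 := by
    simp [hw, hu.2.2, ← hper]
  have hint : (T : ℂ) • y + A (∫ t in (0:ℝ)..T, w t) - μ • ι (∫ t in (0:ℝ)..T, w t) = 0 := by
    rw [← hends, ← hFTC, intervalIntegral.integral_sub (hyi.add hAi) hsi,
      intervalIntegral.integral_add hyi hAi, intervalIntegral.integral_smul,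
      A.intervalIntegral_comp_comm hwi, ι.intervalIntegral_comp_comm hwi,
      intervalIntegral.integral_const, sub_zero, Complex.coe_smul]
  have hT0 : (T : ℂ) ≠ 0 := by exact_mod_cast hT.ne'
  refine ⟨(T : ℂ)⁻¹ • ∫ t in (0:ℝ)..T, w t, ?_⟩
  rw [map_smul, map_smul, smul_comm μ, ← smul_sub, inv_smul_eq_iff₀ hT0, eq_comm, ← sub_eq_zero,
    ← hint]
  abel

/-- If `A` has continuous maximal regularity on `[0,T]` with constant `M ≥ 1`,
then there exists `ω₂ ≥ 0` such that `μ - A : E₁ → E₀` is surjective whenever `Re μ > ω₂`. -/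
theorem continuous_max_reg_surjective
    (T M : ℝ) (hT : 0 < T) (hM : 1 ≤ M)
    (ι A : E₁ →L[ℂ] E₀) (hinj : Function.Injective ι) (hdense : DenseRange ι)
    (hclosed : ClosedVia ι A) (hmr : ContMaxReg T M ι A) :
    ∃ ω₂ : ℝ, 0 ≤ ω₂ ∧ ∀ μ : ℂ, ω₂ < μ.re →
      Function.Surjective (fun x : E₁ => μ • ι x - A x) := by
  refine ⟨Real.log M / T, div_nonneg (Real.log_nonneg hM) hT.le, fun μ hμ y => ?_⟩
  have hM0 : 0 < M := by linarith
  have hTmem : T ∈ Icc (0:ℝ) T := ⟨hT.le, le_rfl⟩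
  have hf : ContinuousOn (fun t : ℝ => Complex.exp (μ * t) • y) (Icc 0 T) := by
    apply Continuous.continuousOn
    fun_prop
  choose u hu _ _ using hmr _ hf
  have hnorm : ‖Complex.exp (-(μ * T))‖ = Real.exp (-(μ.re * T)) := by
    simp [Complex.norm_exp]
  have hK : Real.exp (-(μ.re * T)) * M < 1 := by
    rw [div_lt_iff₀ hT] at hμ
    rw [Real.exp_neg, inv_mul_lt_one₀ (Real.exp_pos _)]
    exact (Real.log_lt_iff_lt_exp hM0).1 hμ
  have hcontr : ContractingWith (Real.exp (-(μ.re * T)) * M).toNNReal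
      (fun x => Complex.exp (-(μ * T)) • u x T) := by
    refine ⟨by simpa using hK, LipschitzWith.of_dist_le_mul fun x x' => ?_⟩
    have hsub := (hu x).sub (hu x')
    rw [sub_self] at hsub
    have h := hmr.norm_le_of_homogeneous hsub hTmem
    rw [dist_eq_norm, dist_eq_norm, ← smul_sub, norm_smul, hnorm,
      Real.coe_toNNReal _ (by positivity), mul_assoc]
    gcongr
    exact h
  exact exists_preimage_of_periodic hT (hu _) hcontr.fixedPoint_isFixedPt
end

section
/- Suppose A has continuous maximal regularity on ℝ₊ with constant M ≥ 1. For x ∈ E₀ and μ ∈ ℂ with Re μ > 0, let u_{μ̄}(·,x) ∈ BUC¹(ℝ₊,E₀) ∩ BUC(ℝ₊,E₁) denote the unique solution of u'(t) − A u(t) = e^{−μ̄ t} x on ℝ₊ with u(0) = 0, and define U_μ x := 2 Re μ · ∫₀^∞ e^{−μ t} u_{μ̄}(t,x) dt. Then the integral converges, U_μ x ∈ E₁, and (μ − A) U_μ x = x. In particular, μ − A : E₁ → E₀ is surjective for every μ with Re μ > 0. -/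
/-!
Put `g t = e^{-μt} u(t)`.  Since `u` is bounded in `E₁` and `Re μ > 0`, `g` is integrable in `E₁`
and tends to `0` at infinity, and the equation for `u` gives
`(ι g)' = -μ ι g + A g + e^{-2 Re μ t} x`, because `μ + μ̄ = 2 Re μ`.  Integrating over `(0, ∞)`,
the left side contributes nothing as `g 0 = 0`, and the bounded operators `ι` and `A` commute with
the integral, so `(μ ι - A) ∫ g = ∫ e^{-2 Re μ t} x dt = x / (2 Re μ)`.

Surjectivity follows by applying this to the solution provided by maximal regularity: the forcing
term `e^{-μ̄t} x` is bounded and Lipschitz on `ℝ₊`.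
-/

open Set Filter Topology MeasureTheory

variable {E₀ E₁ : Type*} [NormedAddCommGroup E₀] [NormedSpace ℂ E₀] [CompleteSpace E₀]
  [NormedAddCommGroup E₁] [NormedSpace ℂ E₁] [CompleteSpace E₁]

/-- `f ∈ BUC(ℝ₊, E)`: `f` is bounded and uniformly continuous on `[0,∞)`. -/
def BUCOn {E : Type*} [NormedAddCommGroup E] (f : ℝ → E) : Prop :=
  UniformContinuousOn f (Set.Ici 0) ∧ ∃ C : ℝ, ∀ t ∈ Set.Ici (0:ℝ), ‖f t‖ ≤ C

/-- `u ∈ BUC¹(ℝ₊,E₀) ∩ BUC(ℝ₊,E₁)` is a solution of `u' - A u = f`, `u 0 = x` on `ℝ₊`,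
where `E₁` is viewed as a subspace of `E₀` via the embedding `ι`.  The derivative of
`ι ∘ u` is `f + A ∘ u`, which is bounded and (for `f ∈ BUC`) uniformly continuous, so the
`BUC¹`-requirement is contained in this predicate. -/
def IsSolP (ι A : E₁ →L[ℂ] E₀) (f : ℝ → E₀) (x : E₁) (u : ℝ → E₁) : Prop :=
  UniformContinuousOn u (Set.Ici 0) ∧
  (∃ C : ℝ, ∀ t ∈ Set.Ici (0:ℝ), ‖f t + A (u t)‖ + ‖u t‖ ≤ C) ∧
  (∀ t ∈ Set.Ici (0:ℝ),
    HasDerivWithinAt (fun s => ι (u s)) (f t + A (u t)) (Set.Ici 0) t) ∧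
  u 0 = x

/-- `A` has continuous maximal regularity on `ℝ₊` with constant `M ≥ 1`: for every
`f ∈ BUC(ℝ₊,E₀)` and every `x ∈ E₁` there is a unique solution
`u ∈ BUC¹(ℝ₊,E₀) ∩ BUC(ℝ₊,E₁)` of `u' - Au = f`, `u 0 = x`, and it satisfies
`sup_{t≥0} (‖u'(t)‖₀ + ‖u(t)‖₁) ≤ M (sup_{t≥0} ‖f‖₀ + ‖x‖₁)`. -/
def ContMaxRegP (M : ℝ) (ι A : E₁ →L[ℂ] E₀) : Prop :=
  ∀ f : ℝ → E₀, BUCOn f → ∀ x : E₁,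
    ∃ u : ℝ → E₁, IsSolP ι A f x u ∧
      (∀ v : ℝ → E₁, IsSolP ι A f x v → Set.EqOn v u (Set.Ici 0)) ∧
      (∀ C : ℝ, (∀ s ∈ Set.Ici (0:ℝ), ‖f s‖ ≤ C) →
        ∀ t ∈ Set.Ici (0:ℝ), ‖f t + A (u t)‖ + ‖u t‖ ≤ M * (C + ‖x‖))

lemma norm_cexp_neg_mul (μ : ℂ) (t : ℝ) :
    ‖Complex.exp (-(μ * (t:ℂ)))‖ = Real.exp (-μ.re * t) := by
  rw [Complex.norm_exp]; simp

lemma hasDerivAt_cexp_neg_mul (μ : ℂ) (t : ℝ) :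
    HasDerivAt (fun t : ℝ => Complex.exp (-(μ * (t:ℂ))))
      (-μ * Complex.exp (-(μ * (t:ℂ)))) t := by
  have h1 : HasDerivAt (fun t : ℝ => (t:ℂ)) 1 t := Complex.ofRealCLM.hasDerivAt
  have h2 := (h1.const_mul μ).neg.cexp
  refine HasDerivAt.congr_deriv (f := fun t : ℝ => Complex.exp (-(μ * (t:ℂ)))) h2 ?_
  change Complex.exp (-(μ * (t:ℂ))) * -(μ * 1) = _
  ring

lemma bucOn_cexp_smul {E : Type*} [NormedAddCommGroup E] [NormedSpace ℂ E]
    {μ : ℂ} (hμ : 0 ≤ μ.re) (x : E) :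
    BUCOn (fun t : ℝ => Complex.exp (-(μ * (t:ℂ))) • x) := by
  have hle : ∀ t ∈ Set.Ici (0:ℝ), ‖Complex.exp (-(μ * (t:ℂ)))‖ ≤ 1 := by
    intro t ht
    rw [norm_cexp_neg_mul, Real.exp_le_one_iff]
    nlinarith [mul_nonneg hμ (Set.mem_Ici.1 ht)]
  refine ⟨?_, ‖x‖, fun t ht => ?_⟩
  · refine LipschitzOnWith.uniformContinuousOn (K := ‖μ‖₊ * ‖x‖₊) ?_
    refine (convex_Ici (0:ℝ)).lipschitzOnWith_of_nnnorm_hasDerivWithin_le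
      (fun t _ => ((hasDerivAt_cexp_neg_mul μ t).smul_const x).hasDerivWithinAt) ?_
    intro t ht
    rw [nnnorm_smul, nnnorm_mul, nnnorm_neg]
    have h : ‖Complex.exp (-(μ * (t:ℂ)))‖₊ ≤ 1 := hle t ht
    gcongr
    exact mul_le_of_le_one_right zero_le h
  · rw [norm_smul]
    exact mul_le_of_le_one_left (norm_nonneg _) (hle t ht)

/-- The integral in the definition of `U_μ x` converges, for any bounded continuous `u`. -/
lemma integrableOn_cexp_smul {E : Type*} [NormedAddCommGroup E] [NormedSpace ℂ E]
    {μ : ℂ} (hμ : 0 < μ.re) {u : ℝ → E} (hu : ContinuousOn u (Set.Ici 0)) {C : ℝ}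
    (hC : ∀ t ∈ Set.Ici (0:ℝ), ‖u t‖ ≤ C) :
    IntegrableOn (fun t : ℝ => Complex.exp (-(μ * (t:ℂ))) • u t) (Set.Ioi 0) := by
  refine Integrable.mono' (g := fun t => Real.exp (-μ.re * t) * C)
    ((exp_neg_integrableOn_Ioi 0 hμ).mul_const C) ?_ ?_
  · refine ContinuousOn.aestronglyMeasurable ?_ measurableSet_Ioi
    exact (Continuous.continuousOn (by fun_prop)).smul (hu.mono Set.Ioi_subset_Ici_self)
  · refine (ae_restrict_iff' measurableSet_Ioi).2 (Eventually.of_forall fun t ht => ?_)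
    rw [norm_smul, norm_cexp_neg_mul]
    gcongr
    exact hC t (Set.Ioi_subset_Ici_self ht)

/-- The equation for `u`, tested against `e^{-μt}` on the half line. -/
lemma resolvent_integral_eq (ι A : E₁ →L[ℂ] E₀) {μ : ℂ} (hμ : 0 < μ.re) (x : E₀) (u : ℝ → E₁)
    (hu : IsSolP ι A (fun t : ℝ => Complex.exp (-((starRingEnd ℂ) μ * (t:ℂ))) • x) 0 u) :
    IntegrableOn (fun t : ℝ => Complex.exp (-(μ * (t:ℂ))) • u t) (Set.Ioi 0) ∧
    ((2 * μ.re : ℝ) : ℂ) • (μ • ι (∫ t in Set.Ioi (0:ℝ), Complex.exp (-(μ * (t:ℂ))) • u t)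
      - A (∫ t in Set.Ioi (0:ℝ), Complex.exp (-(μ * (t:ℂ))) • u t)) = x := by
  obtain ⟨huc, ⟨C, hC⟩, hder, h0⟩ := hu
  have hCu : ∀ t ∈ Set.Ici (0:ℝ), ‖u t‖ ≤ C := fun t ht =>
    (le_add_of_nonneg_left (norm_nonneg _)).trans (hC t ht)
  have hint := integrableOn_cexp_smul hμ huc.continuousOn hCu
  refine ⟨hint, ?_⟩
  set g : ℝ → E₁ := fun t => Complex.exp (-(μ * (t:ℂ))) • u t with hg
  set S : E₁ →L[ℂ] E₀ := μ • ι - A with hS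
  set c : ℂ := ((2 * μ.re : ℝ) : ℂ) with hc
  have hcre : 0 < c.re := by rw [hc, Complex.ofReal_re]; linarith
  have hc0 : c ≠ 0 := fun h => by simp [h] at hcre
  have hsum : μ + (starRingEnd ℂ) μ = c := Complex.add_conj μ
  have hderiv : ∀ t ∈ Set.Ici (0:ℝ), HasDerivWithinAt (fun s => ι (g s))
      (Complex.exp (-(c * (t:ℂ))) • x - S (g t)) (Set.Ici 0) t := by
    intro t ht
    have h := (hasDerivAt_cexp_neg_mul μ t).hasDerivWithinAt.smul (hder t ht)
    have he : Complex.exp (-(c * (t:ℂ))) =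
        Complex.exp (-(μ * (t:ℂ))) * Complex.exp (-((starRingEnd ℂ) μ * (t:ℂ))) := by
      rw [← Complex.exp_add, ← hsum]; ring_nf
    convert h using 1
    · ext s; simp [hg]
    · simp only [hS, hg, he, sub_apply, smul_apply,
        map_smul]
      module
  have hSint : IntegrableOn (fun t => S (g t)) (Set.Ioi 0) := S.integrable_comp hint
  have hxint : IntegrableOn (fun t : ℝ => Complex.exp (-(c * (t:ℂ))) • x) (Set.Ioi 0) :=
    integrableOn_cexp_smul hcre continuousOn_const (fun _ _ => le_rfl)
  have hlim : Tendsto (fun t => ι (g t)) atTop (𝓝 0) := by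
    have h1 : Tendsto (fun t : ℝ => Real.exp (-μ.re * t) * C) atTop (𝓝 0) := by
      have := Real.tendsto_exp_atBot.comp
        ((tendsto_id (α := ℝ)).const_mul_atTop_of_neg (neg_neg_of_pos hμ))
      simpa using this.mul_const C
    have h2 : Tendsto g atTop (𝓝 0) := by
      refine squeeze_zero_norm' ?_ h1
      filter_upwards [eventually_ge_atTop (0:ℝ)] with t ht
      rw [hg, norm_smul, norm_cexp_neg_mul]
      gcongr
      exact hCu t ht
    simpa [Function.comp_def] using (ι.continuous.tendsto 0).comp h2
  have hFTC := integral_Ioi_of_hasDerivAt_of_tendsto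
    (hderiv 0 Set.self_mem_Ici).continuousWithinAt
    (fun t ht => (hderiv t (Set.Ioi_subset_Ici_self ht)).hasDerivAt (Ici_mem_nhds ht))
    (hxint.sub hSint) hlim
  have hexp : ∫ t in Set.Ioi (0:ℝ), Complex.exp (-(c * (t:ℂ))) = c⁻¹ := by
    have := integral_exp_mul_complex_Ioi (a := -c) (by simpa using hcre) 0
    simpa using this
  rw [integral_sub hxint hSint, integral_smul_const, hexp, S.integral_comp_comm hint] at hFTC
  have hgz : g 0 = 0 := by simp [hg, h0]
  rw [hgz, map_zero, sub_zero, sub_eq_zero] at hFTC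
  have hS' : μ • ι (∫ t in Set.Ioi (0:ℝ), g t) - A (∫ t in Set.Ioi (0:ℝ), g t) = c⁻¹ • x := by
    rw [hFTC]; simp [hS]
  rw [hS', smul_inv_smul₀ hc0]

/-- If `A` has continuous maximal regularity on `ℝ₊` with `M ≥ 1` and
`Re μ > 0`, let `u_{μ̄}(·,x)` be the unique solution of `u' - Au = e^{-μ̄ t}x`, `u 0 = 0` on
`ℝ₊` and `U_μ x := 2Reμ ∫₀^∞ e^{-μt} u_{μ̄}(t,x) dt`.  Then the integral converges,
`U_μ x ∈ E₁` and `(μ - A) U_μ x = x`; in particular `μ - A : E₁ → E₀` is surjective. -/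
theorem half_line_max_reg_Umu_and_surjective
    (M : ℝ) (hM : 1 ≤ M)
    (ι A : E₁ →L[ℂ] E₀) (hinj : Function.Injective ι) (hdense : DenseRange ι)
    (hclosed : ClosedVia ι A) (hmr : ContMaxRegP M ι A) :
    ∀ μ : ℂ, 0 < μ.re →
      (∀ (x : E₀) (u : ℝ → E₁),
        IsSolP ι A (fun t : ℝ => Complex.exp (-((starRingEnd ℂ) μ * (t:ℂ))) • x) 0 u →
        MeasureTheory.IntegrableOn
            (fun t : ℝ => Complex.exp (-(μ * (t:ℂ))) • u t) (Set.Ioi 0) ∧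
        ∀ U : E₁,
          U = ((2 * μ.re : ℝ) : ℂ) •
              ∫ t in Set.Ioi (0:ℝ), Complex.exp (-(μ * (t:ℂ))) • u t →
          μ • ι U - A U = x) ∧
      Function.Surjective (fun x : E₁ => μ • ι x - A x) := by
  intro μ hμ
  have key : ∀ (x : E₀) (u : ℝ → E₁),
      IsSolP ι A (fun t : ℝ => Complex.exp (-((starRingEnd ℂ) μ * (t:ℂ))) • x) 0 u →
      ∀ U : E₁, U = ((2 * μ.re : ℝ) : ℂ) •
        ∫ t in Set.Ioi (0:ℝ), Complex.exp (-(μ * (t:ℂ))) • u t → μ • ι U - A U = x := by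
    rintro x u hu U rfl
    refine Eq.trans ?_ (resolvent_integral_eq ι A hμ x u hu).2
    rw [map_smul, map_smul, smul_sub, smul_comm μ]
  refine ⟨fun x u hu => ⟨(resolvent_integral_eq ι A hμ x u hu).1, key x u hu⟩, fun x => ?_⟩
  obtain ⟨u, hu, -, -⟩ := hmr _
    (bucOn_cexp_smul (μ := (starRingEnd ℂ) μ) (by simpa using hμ.le) x) 0
  exact ⟨_, key x u hu _ rfl⟩
end
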